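/- Let f : ℝ^d → ℝ be ℓ-Lipschitz and L-smooth, u uniform on the sphere of radius √d, and λ > 0. For any C₀ > 0, if the clipping threshold C satisfies C ≥ C₀ + Lλd/2, then the probability that the zeroth-order finite difference exceeds the threshold is bounded: P(|f(x + λu) − f(x − λu)|/(2λ) ≥ C) ≤ 2√(2π)·exp(−C₀²/(8ℓ²)). -/

import Mathlib

open MeasureTheory
open scoped RealInnerProductSpace

/-!
The finite difference quotient differs from `⟪u, ∇ f x⟫` by at most `L * lam * ‖u‖ ^ 2 / 2`, so
clipping forces `C₀ ≤ |⟪u, ∇ f x⟫|`. This linear form is sub-Gaussian: by rotation invariance its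
law depends only on the norm of the direction, so the direction can be averaged over the vectors
`∑ i, ± t • b i` whose coordinates in an orthonormal basis all have the same absolute value `t`.
The average of `exp ⟪u, ·⟫` over the signs is
`∏ i, cosh (t * ⟪u, b i⟫) ≤ exp (t ^ 2 * ‖u‖ ^ 2 / 2)`.
This yields the tail bound `2 * exp (-C₀ ^ 2 / (2 * ℓ ^ 2))`.
-/

open ProbabilityTheory Module
open scoped NNReal Gradient

section Taylor

variable {E F : Type*} [NormedAddCommGroup E] [NormedSpace ℝ E] [NormedAddCommGroup F]
  [NormedSpace ℝ F] {f : E → F} {f' : E → E →L[ℝ] F} {x : E} {L : ℝ}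

theorem norm_image_add_sub_sub_fderiv_le (hf : ∀ y, HasFDerivAt f (f' y) y)
    (hL : ∀ y, ‖f' y - f' x‖ ≤ L * ‖y - x‖) (h : E) :
    ‖f (x + h) - f x - f' x h‖ ≤ L / 2 * ‖h‖ ^ 2 := by
  have hderiv (t : ℝ) : HasDerivAt (fun s : ℝ ↦ f (x + s • h) - f x - s • f' x h)
      ((f' (x + t • h) - f' x) h) t := by
    have hline : HasDerivAt (fun s : ℝ ↦ x + s • h) h t := by
      simpa using ((hasDerivAt_id t).smul_const h).const_add x
    simpa using (((hf _).comp_hasDerivAt t hline).sub_const (f x)).fun_sub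
      ((hasDerivAt_id t).smul_const (f' x h))
  have hbound (t : ℝ) : HasDerivAt (fun s : ℝ ↦ L / 2 * ‖h‖ ^ 2 * s ^ 2) (L * ‖h‖ ^ 2 * t) t :=
    ((hasDerivAt_pow 2 t).const_mul (L / 2 * ‖h‖ ^ 2)).congr_deriv (by norm_num; ring)
  have hderiv_le : ∀ t ∈ Set.Ico (0 : ℝ) 1, ‖(f' (x + t • h) - f' x) h‖ ≤ L * ‖h‖ ^ 2 * t := by
    intro t ht
    calc ‖(f' (x + t • h) - f' x) h‖
        ≤ ‖f' (x + t • h) - f' x‖ * ‖h‖ := ContinuousLinearMap.le_opNorm _ _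
      _ ≤ L * ‖x + t • h - x‖ * ‖h‖ := by gcongr; exact hL _
      _ = L * ‖h‖ ^ 2 * t := by
        rw [add_sub_cancel_left, norm_smul, Real.norm_of_nonneg ht.1]; ring
  simpa using image_norm_le_of_norm_deriv_right_le_deriv_boundary
    (fun t _ ↦ (hderiv t).continuousAt.continuousWithinAt)
    (fun t _ ↦ (hderiv t).hasDerivWithinAt) (by simp) hbound hderiv_le
    (Set.right_mem_Icc.2 zero_le_one)

theorem norm_image_add_sub_image_sub_sub_fderiv_le (hf : ∀ y, HasFDerivAt f (f' y) y)
    (hL : ∀ y, ‖f' y - f' x‖ ≤ L * ‖y - x‖) (h : E) :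
    ‖f (x + h) - f (x - h) - (2 : ℝ) • f' x h‖ ≤ L * ‖h‖ ^ 2 := by
  have hadd := norm_image_add_sub_sub_fderiv_le hf hL h
  have hsub := norm_image_add_sub_sub_fderiv_le hf hL (-h)
  rw [← sub_eq_add_neg, map_neg, norm_neg] at hsub
  calc ‖f (x + h) - f (x - h) - (2 : ℝ) • f' x h‖
      = ‖(f (x + h) - f x - f' x h) - (f (x - h) - f x - -f' x h)‖ := by
        congr 1; module
    _ ≤ L * ‖h‖ ^ 2 := by linarith [norm_sub_le_of_le hadd hsub]

end Taylor

section Gradient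

variable {E : Type*} [NormedAddCommGroup E] [InnerProductSpace ℝ E] [CompleteSpace E]
  {f : E → ℝ} {x : E}

theorem norm_gradient_le_abs_of_lipschitz {ℓ : ℝ} (hf : ∀ y, |f y - f x| ≤ ℓ * ‖y - x‖) :
    ‖∇ f x‖ ≤ |ℓ| := by
  rw [← (InnerProductSpace.toDual ℝ E).norm_map, toDual_gradient]
  refine norm_fderiv_le_of_lip' ℝ (abs_nonneg ℓ) (.of_forall fun y ↦ (hf y).trans ?_)
  gcongr
  exact le_abs_self ℓ

theorem abs_sub_two_mul_inner_gradient_le {L : ℝ} (hf : Differentiable ℝ f)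
    (hL : ∀ y, ‖∇ f y - ∇ f x‖ ≤ L * ‖y - x‖) (h : E) :
    |f (x + h) - f (x - h) - 2 * ⟪h, ∇ f x⟫| ≤ L * ‖h‖ ^ 2 := by
  have hfderiv (y : E) : ‖fderiv ℝ f y - fderiv ℝ f x‖ ≤ L * ‖y - x‖ := by
    rw [← toDual_gradient, ← toDual_gradient, ← map_sub, LinearIsometryEquiv.norm_map]
    exact hL y
  simpa [inner_gradient_right] using
    norm_image_add_sub_image_sub_sub_fderiv_le (fun y ↦ (hf y).hasFDerivAt) hfderiv h

theorem abs_finite_difference_sub_inner_gradient_le {L lam : ℝ} (hlam : 0 < lam)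
    (hf : Differentiable ℝ f) (hL : ∀ y, ‖∇ f y - ∇ f x‖ ≤ L * ‖y - x‖) (u : E) :
    |(f (x + lam • u) - f (x - lam • u)) / (2 * lam) - ⟪u, ∇ f x⟫| ≤ L * lam * ‖u‖ ^ 2 / 2 := by
  have htaylor := abs_sub_two_mul_inner_gradient_le hf hL (lam • u)
  rw [real_inner_smul_left, norm_smul, Real.norm_of_nonneg hlam.le] at htaylor
  have hfactor : (f (x + lam • u) - f (x - lam • u)) / (2 * lam) - ⟪u, ∇ f x⟫ =
      (f (x + lam • u) - f (x - lam • u) - 2 * (lam * ⟪u, ∇ f x⟫)) / (2 * lam) := by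
    field_simp
  rw [hfactor, abs_div, abs_of_pos (by positivity : 0 < 2 * lam), div_le_iff₀ (by positivity)]
  linarith

end Gradient

section SubGaussian

variable {Ω : Type*} {mΩ : MeasurableSpace Ω} {μ : Measure Ω} {X : Ω → ℝ} {c : ℝ≥0}

theorem hasSubgaussianMGF_mono {c' : ℝ≥0} (hX : HasSubgaussianMGF X c μ) (hc : c ≤ c') :
    HasSubgaussianMGF X c' μ where
  integrable_exp_mul := hX.integrable_exp_mul
  mgf_le t := (hX.mgf_le t).trans (by gcongr)

theorem measure_le_abs_le_of_hasSubgaussianMGF [IsFiniteMeasure μ] (hX : HasSubgaussianMGF X c μ)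
    {ε : ℝ} (hε : 0 ≤ ε) :
    μ {ω | ε ≤ |X ω|} ≤ ENNReal.ofReal (2 * Real.exp (-ε ^ 2 / (2 * c))) := by
  have hunion : {ω | ε ≤ |X ω|} = {ω | ε ≤ X ω} ∪ {ω | ε ≤ (-X) ω} := by
    ext ω
    simp [le_abs]
  rw [← ofReal_measureReal, hunion]
  apply ENNReal.ofReal_le_ofReal
  linarith [measureReal_union_le (μ := μ) {ω | ε ≤ X ω} {ω | ε ≤ (-X) ω},
    hX.measure_ge_le hε, hX.neg.measure_ge_le hε]

end SubGaussian

section Signs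

variable {ι : Type*} [Fintype ι]

theorem sum_exp_sum_sign_mul [DecidableEq ι] (w : ι → ℝ) :
    ∑ ε : ι → ℤˣ, Real.exp (∑ i, ((ε i : ℤ) : ℝ) * w i) = ∏ i, 2 * Real.cosh (w i) := by
  have hcosh (y : ℝ) : 2 * Real.cosh y = ∑ s : ℤˣ, Real.exp (((s : ℤ) : ℝ) * y) := by
    simp [Real.cosh_eq, mul_div_cancel₀]
  simp only [hcosh, Fintype.prod_sum, Real.exp_sum]

theorem sum_exp_sum_sign_mul_le [DecidableEq ι] (w : ι → ℝ) :
    ∑ ε : ι → ℤˣ, Real.exp (∑ i, ((ε i : ℤ) : ℝ) * w i) ≤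
      2 ^ Fintype.card ι * Real.exp ((∑ i, w i ^ 2) / 2) :=
  calc ∑ ε : ι → ℤˣ, Real.exp (∑ i, ((ε i : ℤ) : ℝ) * w i)
      = ∏ i, 2 * Real.cosh (w i) := sum_exp_sum_sign_mul w
    _ ≤ ∏ i, 2 * Real.exp (w i ^ 2 / 2) := by
        gcongr with i
        exact Real.cosh_le_exp_half_sq (w i)
    _ = 2 ^ Fintype.card ι * Real.exp ((∑ i, w i ^ 2) / 2) := by
        rw [Finset.prod_mul_distrib, ← Real.exp_sum, Finset.sum_div, Finset.prod_const,
          Finset.card_univ]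

variable {E : Type*} [NormedAddCommGroup E] [InnerProductSpace ℝ E]

/-- The vector whose coordinates in the orthonormal basis `b` are `ε i * t`, that is, a vertex of
the cube of half-width `t` centred at the origin. Signs are encoded as units of `ℤ`. -/
noncomputable def signVector (b : OrthonormalBasis ι ℝ E) (t : ℝ) (ε : ι → ℤˣ) : E :=
  ∑ i, (((ε i : ℤ) : ℝ) * t) • b i

variable (b : OrthonormalBasis ι ℝ E) (t : ℝ)

theorem inner_signVector (u : E) (ε : ι → ℤˣ) :
    ⟪u, signVector b t ε⟫ = ∑ i, ((ε i : ℤ) : ℝ) * (t * ⟪u, b i⟫) := by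
  simp only [signVector, inner_sum, real_inner_smul_right, mul_assoc]

theorem norm_sq_signVector (ε : ι → ℤˣ) : ‖signVector b t ε‖ ^ 2 = Fintype.card ι * t ^ 2 := by
  have hsign (i : ι) : ((ε i : ℤ) : ℝ) ^ 2 = 1 := by
    rcases Int.units_eq_one_or (ε i) with h | h <;> simp [h]
  have hcoord (i : ι) : ⟪b i, signVector b t ε⟫ = ((ε i : ℤ) : ℝ) * t :=
    b.orthonormal.inner_right_fintype _ i
  simp [← b.sum_sq_inner_right, hcoord, mul_pow, hsign]

theorem sum_exp_inner_signVector_le [DecidableEq ι] (u : E) :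
    ∑ ε, Real.exp ⟪u, signVector b t ε⟫ ≤
      2 ^ Fintype.card ι * Real.exp (t ^ 2 * ‖u‖ ^ 2 / 2) := by
  have hsum : ∑ i, (t * ⟪u, b i⟫) ^ 2 = t ^ 2 * ‖u‖ ^ 2 := by
    simp only [mul_pow, ← Finset.mul_sum, b.sum_sq_inner_left]
  simpa only [inner_signVector, hsum] using sum_exp_sum_sign_mul_le fun i ↦ t * ⟪u, b i⟫

end Signs

/-- Invariance of a measure under every linear isometry of the space, reflections included. Together
with its radius, this characterizes the uniform probability measure on a centred sphere. -/
def IsRotationInvariant {E : Type*} [NormedAddCommGroup E] [InnerProductSpace ℝ E]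
    [MeasurableSpace E] (μ : Measure E) : Prop :=
  ∀ T : E ≃ₗᵢ[ℝ] E, μ.map T = μ

section RotationInvariant

variable {E : Type*} [NormedAddCommGroup E] [InnerProductSpace ℝ E] [MeasurableSpace E]
  [BorelSpace E] {μ : Measure E}

theorem integrable_exp_inner [SecondCountableTopology E] [IsFiniteMeasure μ] {R : ℝ}
    (hR : ∀ᵐ u ∂μ, ‖u‖ ≤ R) (a : E) : Integrable (fun u ↦ Real.exp ⟪u, a⟫) μ := by
  refine .of_bound (by fun_prop) (Real.exp (R * ‖a‖)) ?_
  filter_upwards [hR] with u hu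
  rw [Real.norm_eq_abs, Real.abs_exp, Real.exp_le_exp]
  exact (real_inner_le_norm u a).trans (by gcongr)

namespace IsRotationInvariant

theorem identDistrib_inner (hμ : IsRotationInvariant μ) {a b : E} (hab : ‖a‖ = ‖b‖) :
    IdentDistrib (fun u ↦ ⟪u, a⟫) (fun u ↦ ⟪u, b⟫) μ μ where
  aemeasurable_fst := by fun_prop
  aemeasurable_snd := by fun_prop
  map_eq := by
    let T := Submodule.reflection (ℝ ∙ (a - b))ᗮ
    have hT : T a = b := Submodule.reflection_sub hab
    conv_rhs => rw [← hμ T, Measure.map_map (by fun_prop) T.continuous.measurable]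
    simp only [Function.comp_def, ← hT, LinearIsometryEquiv.inner_map_map]

variable [FiniteDimensional ℝ E] [IsProbabilityMeasure μ] {R : ℝ≥0}

theorem integral_exp_inner_le (hμ : IsRotationInvariant μ) (hR : ∀ᵐ u ∂μ, ‖u‖ ≤ R) (a : E) :
    ∫ u, Real.exp ⟪u, a⟫ ∂μ ≤ Real.exp ((R * ‖a‖) ^ 2 / finrank ℝ E / 2) := by
  set d := finrank ℝ E with hd
  set t := ‖a‖ / √d with ht
  let v := signVector (stdOrthonormalBasis ℝ E) t
  have ht_sq : t ^ 2 = ‖a‖ ^ 2 / d := by rw [ht, div_pow, Real.sq_sqrt d.cast_nonneg]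
  have hnorm (ε) : ‖a‖ = ‖v ε‖ := by
    rw [← sq_eq_sq₀ (norm_nonneg _) (norm_nonneg _), norm_sq_signVector, Fintype.card_fin, ← hd,
      ht_sq]
    rcases subsingleton_or_nontrivial E with hE | hE
    · simp [Subsingleton.elim a 0]
    · have hd_pos : 0 < d := finrank_pos
      field_simp
  have hsum (u : E) (hu : ‖u‖ ≤ R) :
      ∑ ε, Real.exp ⟪u, v ε⟫ ≤ 2 ^ d * Real.exp ((R * ‖a‖) ^ 2 / d / 2) := by
    have hexp : (R * ‖a‖) ^ 2 / d = t ^ 2 * R ^ 2 := by rw [ht_sq]; ring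
    refine (sum_exp_inner_signVector_le _ t u).trans ?_
    rw [Fintype.card_fin, hexp]
    gcongr
  refine le_of_mul_le_mul_left ?_ (pow_pos two_pos d : (0 : ℝ) < 2 ^ d)
  calc 2 ^ d * ∫ u, Real.exp ⟪u, a⟫ ∂μ
      = ∑ ε, ∫ u, Real.exp ⟪u, v ε⟫ ∂μ := by
        have hint (ε) : ∫ u, Real.exp ⟪u, v ε⟫ ∂μ = ∫ u, Real.exp ⟪u, a⟫ ∂μ :=
          ((hμ.identDistrib_inner (hnorm ε)).comp Real.measurable_exp).integral_eq.symm
        simp [hint, d]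
    _ = ∫ u, ∑ ε, Real.exp ⟪u, v ε⟫ ∂μ :=
        (integral_finsetSum _ fun ε _ ↦ integrable_exp_inner hR (v ε)).symm
    _ ≤ ∫ _, 2 ^ d * Real.exp ((R * ‖a‖) ^ 2 / d / 2) ∂μ :=
        integral_mono_ae (integrable_finsetSum _ fun ε _ ↦ integrable_exp_inner hR (v ε))
          (integrable_const _) (hR.mono hsum)
    _ = 2 ^ d * Real.exp ((R * ‖a‖) ^ 2 / d / 2) := by simp

theorem hasSubgaussianMGF_inner (hμ : IsRotationInvariant μ) (hR : ∀ᵐ u ∂μ, ‖u‖ ≤ R) (a : E) :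
    HasSubgaussianMGF (fun u ↦ ⟪u, a⟫) ((R * ‖a‖₊) ^ 2 / finrank ℝ E) μ where
  integrable_exp_mul t := by
    simpa only [real_inner_smul_right] using integrable_exp_inner hR (t • a)
  mgf_le t := by
    have hexp := hμ.integral_exp_inner_le hR (t • a)
    simp only [real_inner_smul_right, norm_smul, Real.norm_eq_abs] at hexp
    refine hexp.trans_eq (congrArg Real.exp ?_)
    push_cast
    rw [mul_pow, mul_pow, sq_abs]
    ring

theorem measure_le_abs_inner_le (hμ : IsRotationInvariant μ)
    (hsupp : ∀ᵐ u ∂μ, ‖u‖ ≤ √(finrank ℝ E)) {a : E} {ℓ c : ℝ} (ha : ‖a‖ ≤ ℓ) (hc : 0 ≤ c) :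
    μ {u | c ≤ |⟪u, a⟫|} ≤ ENNReal.ofReal (2 * Real.exp (-c ^ 2 / (2 * ℓ ^ 2))) := by
  lift ℓ to ℝ≥0 using (norm_nonneg a).trans ha
  have hvariance : (NNReal.sqrt (finrank ℝ E) * ‖a‖₊) ^ 2 / finrank ℝ E ≤ ℓ ^ 2 := by
    rw [mul_pow, NNReal.sq_sqrt, mul_div_right_comm]
    calc (finrank ℝ E : ℝ≥0) / finrank ℝ E * ‖a‖₊ ^ 2 ≤ 1 * ℓ ^ 2 := by
          gcongr
          · exact div_self_le_one _
          · exact ha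
      _ = ℓ ^ 2 := one_mul _
  have hsubgaussian := hμ.hasSubgaussianMGF_inner (R := NNReal.sqrt (finrank ℝ E))
    (by simpa using hsupp) a
  exact_mod_cast measure_le_abs_le_of_hasSubgaussianMGF
    (hasSubgaussianMGF_mono hsubgaussian hvariance) hc

end IsRotationInvariant

end RotationInvariant

theorem nonneg_of_norm_sub_le_mul_norm_sub {E F : Type*} [NormedAddCommGroup E]
    [SeminormedAddCommGroup F] [Nontrivial E] {g : E → F} {x : E} {L : ℝ}
    (hg : ∀ y, ‖g y - g x‖ ≤ L * ‖y - x‖) : 0 ≤ L := by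
  obtain ⟨y, hy⟩ := exists_ne x
  exact nonneg_of_mul_nonneg_left ((norm_nonneg _).trans (hg y)) (norm_sub_pos_iff.2 hy)

theorem two_mul_exp_neg_sq_div_le (c ℓ : ℝ) :
    2 * Real.exp (-c ^ 2 / (2 * ℓ ^ 2)) ≤
      2 * √(2 * Real.pi) * Real.exp (-c ^ 2 / (8 * ℓ ^ 2)) := by
  have hpi : 1 ≤ √(2 * Real.pi) := Real.one_le_sqrt.2 (by linarith [Real.pi_gt_three])
  have hexponent : -c ^ 2 / (2 * ℓ ^ 2) ≤ -c ^ 2 / (8 * ℓ ^ 2) := by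
    have hquot : -c ^ 2 / (8 * ℓ ^ 2) - -c ^ 2 / (2 * ℓ ^ 2) = 3 / 8 * (c ^ 2 / ℓ ^ 2) := by ring
    have hnonneg : 0 ≤ c ^ 2 / ℓ ^ 2 := by positivity
    linarith
  gcongr
  exact le_mul_of_one_le_right zero_le_two hpi

section Clipping

variable {E : Type*} [NormedAddCommGroup E] [InnerProductSpace ℝ E] [FiniteDimensional ℝ E]
  {f : E → ℝ} {x : E} {L : ℝ}

theorem le_abs_inner_gradient_of_le_abs_finite_difference {lam C C₀ : ℝ} (hlam : 0 < lam)
    (hf : Differentiable ℝ f) (hL : ∀ y, ‖∇ f y - ∇ f x‖ ≤ L * ‖y - x‖)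
    (hC : C₀ + L * lam * finrank ℝ E / 2 ≤ C) {u : E} (hu : ‖u‖ ≤ √(finrank ℝ E))
    (hclip : C ≤ |f (x + lam • u) - f (x - lam • u)| / (2 * lam)) :
    C₀ ≤ |⟪u, ∇ f x⟫| := by
  have herror := abs_finite_difference_sub_inner_gradient_le hlam hf hL u
  have hradius : L * lam * ‖u‖ ^ 2 ≤ L * lam * finrank ℝ E := by
    rcases subsingleton_or_nontrivial E with hE | hE
    · simp [Subsingleton.elim u 0, finrank_zero_of_subsingleton]
    · have hL_nonneg := nonneg_of_norm_sub_le_mul_norm_sub hL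
      gcongr
      exact (Real.le_sqrt (norm_nonneg u) (Nat.cast_nonneg _)).1 hu
  have htriangle := abs_sub_abs_le_abs_sub
    ((f (x + lam • u) - f (x - lam • u)) / (2 * lam)) ⟪u, ∇ f x⟫
  rw [abs_div, abs_of_pos (by positivity : 0 < 2 * lam)] at htriangle
  linarith

theorem stmt7_general [MeasurableSpace E] [BorelSpace E] {μ : Measure E} [IsProbabilityMeasure μ]
    {ℓ lam C C₀ : ℝ} (hlam : 0 < lam) (hgrad : ‖∇ f x‖ ≤ ℓ) (hf : Differentiable ℝ f)
    (hL : ∀ y, ‖∇ f y - ∇ f x‖ ≤ L * ‖y - x‖) (hsupp : ∀ᵐ u ∂μ, ‖u‖ ≤ √(finrank ℝ E))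
    (hμ : IsRotationInvariant μ) (hC₀ : 0 ≤ C₀) (hC : C₀ + L * lam * finrank ℝ E / 2 ≤ C) :
    μ {u | C ≤ |f (x + lam • u) - f (x - lam • u)| / (2 * lam)} ≤
      ENNReal.ofReal (2 * Real.exp (-C₀ ^ 2 / (2 * ℓ ^ 2))) := by
  refine le_trans (measure_mono_ae ?_) (hμ.measure_le_abs_inner_le hsupp hgrad hC₀)
  filter_upwards [hsupp] with u hu hclip
  exact le_abs_inner_gradient_of_le_abs_finite_difference hlam hf hL hC hu hclip

end Clipping

/-- Let `f : ℝ^d → ℝ` be ℓ-Lipschitz and L-smooth, `u` uniform on the sphere of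
radius `√d` (characterized as the rotation-invariant probability measure on that sphere) and
`λ > 0`. For any `C₀ > 0`, if the clipping threshold `C` satisfies `C ≥ C₀ + Lλd/2`, then
`P(|f(x+λu) − f(x−λu)|/(2λ) ≥ C) ≤ 2√(2π)·exp(−C₀²/(8ℓ²))`. -/
theorem stmt7 {d : ℕ} (f : EuclideanSpace ℝ (Fin d) → ℝ) (ℓ L lam : ℝ)
    (hlam : 0 < lam)
    (hlip : ∀ x y, |f x - f y| ≤ ℓ * ‖x - y‖)
    (hdiff : ∀ x, DifferentiableAt ℝ f x)
    (hsmooth : ∀ x y, ‖gradient f x - gradient f y‖ ≤ L * ‖x - y‖)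
    (μ : Measure (EuclideanSpace ℝ (Fin d))) [IsProbabilityMeasure μ]
    (hsupp : μ (Metric.sphere (0 : EuclideanSpace ℝ (Fin d)) (Real.sqrt d)) = 1)
    (hinv : ∀ T : EuclideanSpace ℝ (Fin d) ≃ₗᵢ[ℝ] EuclideanSpace ℝ (Fin d),
      Measure.map (⇑T) μ = μ)
    (x : EuclideanSpace ℝ (Fin d)) (C C₀ : ℝ) (hC₀ : 0 < C₀)
    (hC : C ≥ C₀ + L * lam * (d : ℝ) / 2) :
    μ {u | C ≤ |f (x + lam • u) - f (x - lam • u)| / (2 * lam)} ≤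
      ENNReal.ofReal (2 * Real.sqrt (2 * Real.pi) * Real.exp (-C₀ ^ 2 / (8 * ℓ ^ 2))) := by
  have hradius : ∀ᵐ u ∂μ, ‖u‖ ≤ √(finrank ℝ (EuclideanSpace ℝ (Fin d))) := by
    filter_upwards [(mem_ae_iff_prob_eq_one Metric.isClosed_sphere.measurableSet).2 hsupp] with u hu
    simpa using (mem_sphere_zero_iff_norm.1 hu).le
  have hgrad : ‖∇ f x‖ ≤ |ℓ| := norm_gradient_le_abs_of_lipschitz fun y ↦ hlip y x
  have hsharp := stmt7_general (C₀ := C₀) hlam hgrad hdiff (fun y ↦ hsmooth y x) hradius hinv hC₀.le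
    (by simpa using hC)
  rw [sq_abs] at hsharp
  exact hsharp.trans (ENNReal.ofReal_le_ofReal (two_mul_exp_neg_sq_div_le C₀ ℓ))
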